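/- Let J be a 12-dimensional symplectic F_2-vector space. Define an action of Sp(J) on 4-element subsets of the set of Arf-invariant-0 quadratic refinements of the symplectic form. For a 4-element set {q_4, q_4+a_1, q_4+a_2, q_4+a_3} of even quadratic forms, assign the invariant: (i) class A_1 if a_1+a_2+a_3 = 0; otherwise (a_1,a_2,a_3 independent) (ii) class A_2 if a_i·a_j = 0 for all i≠j; (iii) class A_3 if the number of pairs {i,j} ⊂ {1,2,3} with a_i·a_j = 1 is 1 or 2; (iv) class A_4 if a_i·a_j = 1 for all i≠j. Then these four classes A_1, A_2, A_3, A_4 are exactly the orbits of the Sp(J)-action: two 4-element sets of even quadratic forms lie in the same orbit if and only if they lie in the same class. -/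

import Mathlib

/-- `B` is a symplectic form on the `𝔽₂`-vector space `J`: bilinear, alternating and
non-degenerate. -/
def IsSymplectic {J : Type*} [AddCommGroup J] [Module (ZMod 2) J]
    (B : J → J → ZMod 2) : Prop :=
  (∀ x y z, B (x + y) z = B x z + B y z) ∧
  (∀ x y z, B x (y + z) = B x y + B x z) ∧
  (∀ x, B x x = 0) ∧
  (∀ x, (∀ y, B x y = 0) → x = 0)

/-- The set of quadratic refinements of the form `B`. -/
def QuadSet {J : Type*} [AddCommGroup J] (B : J → J → ZMod 2) : Set (J → ZMod 2) :=
  {q | ∀ x y, q x + q y + q (x + y) = B x y}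

/-- The Arf invariant of `q : J → ℤ/2`: it is `0` iff `q` takes the value `0` on more than
half of the elements of `J`. -/
noncomputable def ArfInv {J : Type*} [Finite J] (q : J → ZMod 2) : ZMod 2 :=
  if Nat.card J < 2 * Nat.card {x : J // q x = 0} then 0 else 1

open scoped Classical in
/-- The class (`A₁`, `A₂`, `A₃` or `A₄`) of a quadruple of even quadratic forms
`{q₄, q₄+a₁, q₄+a₂, q₄+a₃}`, read off from `a₁, a₂, a₃`: class `A₁` if `a₁+a₂+a₃ = 0`;
otherwise `A₂` if all pairings vanish, `A₄` if all pairings are `1`, and `A₃` if the number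
of pairs `{i,j}` with `aᵢ·aⱼ = 1` is `1` or `2`. -/
noncomputable def classIdx {J : Type*} [AddCommGroup J]
    (B : J → J → ZMod 2) (a₁ a₂ a₃ : J) : ℕ :=
  if a₁ + a₂ + a₃ = 0 then 1
  else if B a₁ a₂ = 0 ∧ B a₁ a₃ = 0 ∧ B a₂ a₃ = 0 then 2
  else if B a₁ a₂ = 1 ∧ B a₁ a₃ = 1 ∧ B a₂ a₃ = 1 then 4
  else 3

/-!
Translating all four forms by one vector changes neither the sum of the translation vectors nor
the azygy `B x y + B y z + B z x` of any three of them. The class of a quadruple records whether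
that sum vanishes and how many of the four triples are azygetic, a number that is always even;
hence it is constant on orbits and does not depend on the base point.

Conversely, two quadruples of the same class can be listed so that corresponding triples have the
same azygy. The vectors from the zeroth form to the other three then have equal Gram matrices and
satisfy the same linear relations, and the zeroth forms vanish on them because all forms are even.
A transvection carries one zeroth form to the other, and Witt's extension theorem, proved one
vector at a time by a transvection or a Siegel transformation, matches the remaining vectors.
-/

theorem zmod_two_eq_zero_or_one (c : ZMod 2) : c = 0 ∨ c = 1 := by
  revert c; decide

/-- The translate `q + B(a, ·)` of a form `q`. The quadratic refinements of a symplectic form `B`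
are a torsor under `J` acting in this way. -/
def quadTranslate {J : Type*} (B : J → J → ZMod 2) (q : J → ZMod 2) (a : J) : J → ZMod 2 :=
  fun x => q x + B a x

theorem card_lt_of_arfInv_eq_zero {J : Type*} [Finite J] {q : J → ZMod 2}
    (h : ArfInv q = 0) :
    Nat.card J < 2 * Nat.card {x : J // q x = 0} := by
  by_contra hcard
  simp [ArfInv, hcard] at h

section AddCommGroup

variable {J : Type*} [AddCommGroup J] {B : J → J → ZMod 2} {q q' : J → ZMod 2}

namespace QuadSet

theorem apply_add (hq : q ∈ QuadSet B) (x y : J) : q (x + y) = q x + q y + B x y := by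
  have hxy := hq x y
  grind

theorem form_map_eq (hq : q ∈ QuadSet B) (hq' : q' ∈ QuadSet B) {F : Type*} [FunLike F J J]
    [AddHomClass F J J] {L : F} (hL : ∀ x, q' (L x) = q x) (x y : J) :
    B (L x) (L y) = B x y := by
  rw [← hq' (L x), ← hq x, ← map_add, hL, hL, hL]

end QuadSet

-- If `q a = 1`, then `x ↦ a + x` exchanges the zeros of `q + B(a, ·)` with the non-zeros of `q`,
-- so the two forms cannot both vanish on more than half of `J`.
theorem QuadSet.apply_eq_zero_of_arfInv_eq_zero [Finite J] (hq : q ∈ QuadSet B) {a : J}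
    (h : ArfInv q = 0) (ha : ArfInv (quadTranslate B q a) = 0) : q a = 0 := by
  classical
  by_contra hqa
  have hqa : q a = 1 := (zmod_two_eq_zero_or_one _).resolve_left hqa
  have hcompl : Nat.card {x : J // quadTranslate B q a x = 0} = Nat.card {x : J // ¬ q x = 0} := by
    refine Nat.card_congr ((Equiv.addLeft a).subtypeEquiv fun x => ?_)
    rw [Equiv.coe_addLeft, apply_add hq, hqa, quadTranslate]
    generalize B a x = s, q x = t
    revert s t
    decide
  have hsum : Nat.card {x : J // q x = 0} + Nat.card {x : J // ¬ q x = 0} = Nat.card J := by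
    rw [← Nat.card_sum]
    exact Nat.card_congr (Equiv.sumCompl fun x => q x = 0)
  have hzeros := card_lt_of_arfInv_eq_zero h
  have hzeros' := card_lt_of_arfInv_eq_zero ha
  lia

end AddCommGroup

section Module

variable {J : Type*} [AddCommGroup J] [Module (ZMod 2) J]
  {B : J → J → ZMod 2} {q q' : J → ZMod 2}

namespace IsSymplectic

theorem add_left (hB : IsSymplectic B) (x y z : J) : B (x + y) z = B x z + B y z := hB.1 x y z

theorem add_right (hB : IsSymplectic B) (x y z : J) : B x (y + z) = B x y + B x z := hB.2.1 x y z

theorem self_eq_zero (hB : IsSymplectic B) (x : J) : B x x = 0 := hB.2.2.1 x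

theorem comm (hB : IsSymplectic B) (x y : J) : B x y = B y x := by
  have hxy := hB.self_eq_zero (x + y)
  rw [hB.add_left, hB.add_right, hB.add_right, hB.self_eq_zero, hB.self_eq_zero] at hxy
  grind

/-- The form `B` as a bundled bilinear form, giving access to the duality of `J`. -/
def toBilinForm (hB : IsSymplectic B) : LinearMap.BilinForm (ZMod 2) J :=
  LinearMap.mk₂ (ZMod 2) B hB.add_left
    (fun c x y => ZMod.map_smul (AddMonoidHom.mk' (B · y) fun _ _ => hB.add_left _ _ _) c x)
    hB.add_right
    (fun c x y => ZMod.map_smul (AddMonoidHom.mk' (B x) (hB.add_right x)) c y)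

theorem toBilinForm_apply (hB : IsSymplectic B) (x y : J) : hB.toBilinForm x y = B x y := rfl

theorem zero_left (hB : IsSymplectic B) (x : J) : B 0 x = 0 := hB.toBilinForm.map_zero₂ x

theorem smul_left (hB : IsSymplectic B) (c : ZMod 2) (x y : J) : B (c • x) y = c * B x y :=
  hB.toBilinForm.map_smul₂ c x y

theorem smul_right (hB : IsSymplectic B) (c : ZMod 2) (x y : J) : B x (c • y) = c * B x y :=
  (hB.toBilinForm x).map_smul c y

theorem toBilinForm_nondegenerate (hB : IsSymplectic B) : hB.toBilinForm.Nondegenerate :=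
  ⟨hB.2.2.2, fun x hx => hB.2.2.2 x fun y => (hB.comm x y).trans (hx y)⟩

theorem eq_of_forall_eq (hB : IsSymplectic B) {a b : J} (h : ∀ x, B a x = B b x) : a = b := by
  have hab : a + b = 0 := hB.2.2.2 _ fun x => by rw [hB.add_left, h, CharTwo.add_self_eq_zero]
  rwa [← ZModModule.sub_eq_add, sub_eq_zero] at hab

theorem exists_forall_eq [Finite J] (hB : IsSymplectic B) (f : Module.Dual (ZMod 2) J) :
    ∃ d, ∀ x, B d x = f x := by
  refine ⟨(hB.toBilinForm.toDual hB.toBilinForm_nondegenerate).symm f, fun x => ?_⟩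
  rw [← hB.toBilinForm_apply, LinearMap.BilinForm.apply_toDual_symm_apply]

theorem quadTranslate_zero (hB : IsSymplectic B) (q : J → ZMod 2) : quadTranslate B q 0 = q :=
  funext fun x => by rw [quadTranslate, hB.zero_left, add_zero]

theorem quadTranslate_quadTranslate (hB : IsSymplectic B) (q : J → ZMod 2) (a b : J) :
    quadTranslate B (quadTranslate B q a) b = quadTranslate B q (a + b) :=
  funext fun x => by simp only [quadTranslate, hB.add_left, add_assoc]

theorem quadTranslate_injective (hB : IsSymplectic B) (q : J → ZMod 2) :
    Function.Injective (quadTranslate B q) :=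
  fun _ _ h => hB.eq_of_forall_eq fun x => add_left_cancel (congrFun h x)

end IsSymplectic

namespace QuadSet

theorem quadTranslate_mem (hB : IsSymplectic B) (hq : q ∈ QuadSet B) (a : J) :
    quadTranslate B q a ∈ QuadSet B := fun x y => by
  have hxy := hq x y
  have ha := hB.add_right a x y
  simp only [quadTranslate]
  grind

theorem apply_add_smul (hq : q ∈ QuadSet B) (c : ZMod 2) (x v : J) :
    q (x + c • v) = q x + c * (q v + B x v) := by
  obtain rfl | rfl := zmod_two_eq_zero_or_one c
  · simp
  · simp [apply_add hq, add_assoc]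

theorem exists_eq_quadTranslate [Finite J] (hB : IsSymplectic B) (hq : q ∈ QuadSet B)
    (hq' : q' ∈ QuadSet B) : ∃ d, q' = quadTranslate B q d := by
  let difference : J →+ ZMod 2 := AddMonoidHom.mk' (fun x => q x + q' x) fun x y => by
    rw [apply_add hq, apply_add hq']
    grind
  obtain ⟨d, hd⟩ := hB.exists_forall_eq (difference.toZModLinearMap 2)
  refine ⟨d, funext fun x => ?_⟩
  have hx : B d x = q x + q' x := hd x
  rw [quadTranslate, hx]
  grind

theorem exists_linearEquiv_eq [Finite J] (hB : IsSymplectic B) (hq : q ∈ QuadSet B)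
    (hq' : q' ∈ QuadSet B) {L : J →ₗ[ZMod 2] J} (hL : ∀ x, q' (L x) = q x) :
    ∃ M : J ≃ₗ[ZMod 2] J, ∀ x, M x = L x := by
  have hinj : Function.Injective L := fun x y hxy =>
    hB.eq_of_forall_eq fun z => by
      rw [← form_map_eq hq hq' hL x, hxy, form_map_eq hq hq' hL]
  exact ⟨LinearEquiv.ofInjectiveEndo L hinj, fun _ => rfl⟩

theorem apply_transvection (hB : IsSymplectic B) (hq : q ∈ QuadSet B) (v x : J) :
    q (LinearMap.transvection (hB.toBilinForm v) v x) = q x + B v x * (q v + B v x) := by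
  rw [LinearMap.transvection.apply, hB.toBilinForm_apply, apply_add_smul hq, hB.comm x]

theorem exists_isometry_of_arfInv_eq_zero [Finite J] (hB : IsSymplectic B) (hq : q ∈ QuadSet B)
    (hq' : q' ∈ QuadSet B) (h : ArfInv q = 0) (h' : ArfInv q' = 0) :
    ∃ M : J ≃ₗ[ZMod 2] J, ∀ x, q' (M x) = q x := by
  obtain ⟨d, rfl⟩ := exists_eq_quadTranslate hB hq' hq
  have hd : q' d = 0 := apply_eq_zero_of_arfInv_eq_zero hq' h' h
  have hL (x : J) : q' (LinearMap.transvection (hB.toBilinForm d) d x) =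
      quadTranslate B q' d x := by
    rw [apply_transvection hB hq', hd, zero_add, ← pow_two, ZMod.pow_card, quadTranslate]
  obtain ⟨M, hM⟩ := exists_linearEquiv_eq hB hq hq' hL
  exact ⟨M, fun x => by rw [hM, hL]⟩

end QuadSet

/-- The Siegel (or Eichler) transformation of a quadratic form `q` attached to a singular vector
`p` and a vector `d` orthogonal to it: the isometry of `q` extending the map `x ↦ x + B(d, x) p`
of the hyperplane `p^⊥`. -/
def siegelTransform (hB : IsSymplectic B) (q : J → ZMod 2) (p d : J) : J →ₗ[ZMod 2] J :=
  LinearMap.id + (hB.toBilinForm d).smulRight p + (hB.toBilinForm p).smulRight (d + q d • p)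

theorem siegelTransform_apply (hB : IsSymplectic B) (q : J → ZMod 2) (p d x : J) :
    siegelTransform hB q p d x = x + B d x • p + B p x • (d + q d • p) := rfl

namespace QuadSet

theorem apply_siegelTransform (hB : IsSymplectic B) (hq : q ∈ QuadSet B) {p d : J} (hp : q p = 0)
    (hpd : B p d = 0) (x : J) : q (siegelTransform hB q p d x) = q x := by
  have hdp : B d p = 0 := (hB.comm d p).trans hpd
  have hsq : B p x ^ 2 = B p x := ZMod.pow_card _
  simp only [siegelTransform_apply, apply_add_smul hq, hB.add_left, hB.add_right, hB.smul_left,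
    hB.smul_right, hp, hpd, hdp, hB.self_eq_zero, hB.comm x]
  grind

end QuadSet

theorem exists_dual_eq_one_eq_one {S : Submodule (ZMod 2) J} {a b : J} (ha : a ∉ S)
    (hb : b ∉ S) : ∃ f : Module.Dual (ZMod 2) J, (∀ x ∈ S, f x = 0) ∧ f a = 1 ∧ f b = 1 := by
  obtain ⟨f, hfa, hfS⟩ := Submodule.exists_le_ker_of_notMem ha
  obtain ⟨g, hgb, hgS⟩ := Submodule.exists_le_ker_of_notMem hb
  replace hfa : f a = 1 := (zmod_two_eq_zero_or_one _).resolve_left hfa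
  replace hgb : g b = 1 := (zmod_two_eq_zero_or_one _).resolve_left hgb
  rcases zmod_two_eq_zero_or_one (f b) with hfb | hfb
  · rcases zmod_two_eq_zero_or_one (g a) with hga | hga
    · exact ⟨f + g, fun x hx => by
          rw [LinearMap.add_apply, LinearMap.mem_ker.1 (hfS hx), LinearMap.mem_ker.1 (hgS hx),
            add_zero],
        by simp [hfa, hga], by simp [hfb, hgb]⟩
    · exact ⟨g, fun x hx => hgS hx, hga, hgb⟩
  · exact ⟨f, fun x hx => hfS hx, hfa, hfb⟩

namespace QuadSet

-- With `p = a + b`, a transvection along `p` works if `q p = 1`; if `q p = 0`, then `a` and `b` lie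
-- in `p^⊥`, and a Siegel transformation along `p` works.
theorem exists_isometry_fixing_map_eq [Finite J] (hB : IsSymplectic B) (hq : q ∈ QuadSet B)
    {s : Set J} {a b : J} (ha : a ∉ Submodule.span (ZMod 2) s)
    (hb : b ∉ Submodule.span (ZMod 2) s) (hab : q a = q b) (hs : ∀ u ∈ s, B u a = B u b) :
    ∃ M : J ≃ₗ[ZMod 2] J, (∀ x, q (M x) = q x) ∧ (∀ u ∈ s, M u = u) ∧ M a = b := by
  have hqp : q (a + b) = B a b := by
    rw [apply_add hq, hab, CharTwo.add_self_eq_zero, zero_add]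
  have hpa : B (a + b) a = B a b := by
    rw [hB.add_left, hB.self_eq_zero, hB.comm b, zero_add]
  have hpu (u : J) (hu : u ∈ s) : B (a + b) u = 0 := by
    rw [hB.comm, hB.add_right, hs u hu, CharTwo.add_self_eq_zero]
  have hap : a + (a + b) = b := by rw [← add_assoc, ZModModule.add_self, zero_add]
  rcases zmod_two_eq_zero_or_one (B a b) with hzero | hone
  · obtain ⟨f, hfs, hfa, hfb⟩ := exists_dual_eq_one_eq_one ha hb
    obtain ⟨d, hd⟩ := hB.exists_forall_eq f
    have hpd : B (a + b) d = 0 := by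
      rw [hB.comm, hd, map_add, hfa, hfb, CharTwo.add_self_eq_zero]
    have hL := apply_siegelTransform hB hq (hqp.trans hzero) hpd
    obtain ⟨M, hM⟩ := exists_linearEquiv_eq hB hq hq hL
    refine ⟨M, fun x => by rw [hM, hL], fun u hu => ?_, ?_⟩
    · rw [hM, siegelTransform_apply, hd, hfs u (Submodule.subset_span hu), hpu u hu]
      simp
    · rw [hM, siegelTransform_apply, hd, hfa, hpa, hzero, one_smul, hap]
      simp
  · have hL (x : J) : q (LinearMap.transvection (hB.toBilinForm (a + b)) (a + b) x) = q x := by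
      have hsq : B (a + b) x ^ 2 = B (a + b) x := ZMod.pow_card _
      rw [apply_transvection hB hq, hqp, hone]
      grind
    obtain ⟨M, hM⟩ := exists_linearEquiv_eq hB hq hq hL
    refine ⟨M, fun x => by rw [hM, hL], fun u hu => ?_, ?_⟩
    · rw [hM, LinearMap.transvection.apply, hB.toBilinForm_apply, hpu u hu, zero_smul, add_zero]
    · rw [hM, LinearMap.transvection.apply, hB.toBilinForm_apply, hpa, hone, one_smul, hap]

theorem exists_isometry_of_linearIndependent [Finite J] (hB : IsSymplectic B)
    (hq : q ∈ QuadSet B) (hq' : q' ∈ QuadSet B) {n : ℕ} {v w : Fin n → J}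
    (hv : LinearIndependent (ZMod 2) v) (hw : LinearIndependent (ZMod 2) w)
    (hqq' : ∃ M : J ≃ₗ[ZMod 2] J, ∀ x, q' (M x) = q x) (hqv : ∀ i, q (v i) = q' (w i))
    (hgram : ∀ i j, B (v i) (v j) = B (w i) (w j)) :
    ∃ M : J ≃ₗ[ZMod 2] J, (∀ x, q' (M x) = q x) ∧ ∀ i, M (v i) = w i := by
  induction n with
  | zero =>
    obtain ⟨M, hM⟩ := hqq'
    exact ⟨M, hM, fun i => i.elim0⟩
  | succ n ih =>
    rw [linearIndependent_finSucc'] at hv hw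
    obtain ⟨M, hM, hMv⟩ := ih hv.1 hw.1 (fun i => hqv _) (fun i j => hgram _ _)
    have hMinit : M '' Set.range (Fin.init v) = Set.range (Fin.init w) := by
      rw [← Set.range_comp]
      exact congrArg Set.range (funext hMv)
    have hMlast : M (v (Fin.last n)) ∉ Submodule.span (ZMod 2) (Set.range (Fin.init w)) := by
      rw [← hMinit, ← LinearEquiv.coe_coe, Submodule.span_image, Submodule.mem_map_equiv,
        LinearEquiv.coe_coe, M.symm_apply_apply]
      exact hv.2
    obtain ⟨N, hN, hNw, hNlast⟩ := exists_isometry_fixing_map_eq hB hq' hMlast hw.2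
      ((hM _).trans (hqv _)) (by
        rintro _ ⟨i, rfl⟩
        rw [← hMv i, form_map_eq hq hq' hM, hMv i]
        exact hgram _ _)
    refine ⟨M.trans N, fun x => (hN _).trans (hM x), Fin.lastCases hNlast fun i => ?_⟩
    exact (congrArg N (hMv i)).trans (hNw _ ⟨i, rfl⟩)

end QuadSet

end Module

theorem natCast_card_eq_one_eq_sum {ι : Type*} [Fintype ι] (f : ι → ZMod 2) :
    (Fintype.card {i // f i = 1} : ZMod 2) = ∑ i, f i := by
  rw [Fintype.card_subtype, ← Finset.sum_boole]
  refine Finset.sum_congr rfl fun i _ => ?_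
  rcases zmod_two_eq_zero_or_one (f i) with hi | hi <;> simp [hi]

theorem exists_perm_comp_eq_of_card_eq {ι : Type*} [Fintype ι] {f g : ι → ZMod 2}
    (h : Fintype.card {i // g i = 1} = Fintype.card {i // f i = 1}) :
    ∃ σ : Equiv.Perm ι, f ∘ σ = g := by
  classical
  let ε := Fintype.equivOfCardEq h
  refine ⟨ε.extendSubtype, funext fun i => ?_⟩
  rcases zmod_two_eq_zero_or_one (g i) with hi | hi
  · have hfi : f (ε.extendSubtype i) ≠ 1 := ε.extendSubtype_not_mem i (by simp [hi])
    rw [hi]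
    exact (zmod_two_eq_zero_or_one _).resolve_right hfi
  · rw [hi]
    exact ε.extendSubtype_mem i hi

theorem exists_perm_comp_eq_of_range_eq {ι α : Type*} {f g : ι → α} (hf : Function.Injective f)
    (hg : Function.Injective g) (h : Set.range f = Set.range g) :
    ∃ σ : Equiv.Perm ι, f ∘ σ = g :=
  ⟨(Equiv.ofInjective g hg).trans ((Equiv.setCongr h.symm).trans (Equiv.ofInjective f hf).symm),
    funext fun i => by simp [Equiv.apply_ofInjective_symm]⟩

/-- The azygy of the triple of forms `q + B(x, ·)`, `q + B(y, ·)`, `q + B(z, ·)`, which does not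
depend on `q`: it is `0` if the triple is syzygetic and `1` if it is azygetic. -/
def azygy {J : Type*} (B : J → J → ZMod 2) (x y z : J) : ZMod 2 := B x y + B y z + B z x

theorem azygy_rotate {J : Type*} (B : J → J → ZMod 2) (x y z : J) :
    azygy B y z x = azygy B x y z := by
  unfold azygy
  ring

/-- The azygy of the triple obtained from a quadruple of translation vectors by leaving out the
`i`-th one; the indices `i + 1`, `i + 2`, `i + 3` are taken modulo `4`. -/
def faceAzygy {J : Type*} (B : J → J → ZMod 2) (e : Fin 4 → J) (i : Fin 4) : ZMod 2 :=
  azygy B (e (i + 1)) (e (i + 2)) (e (i + 3))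

/-- The number of azygetic triples contained in a quadruple. -/
def azygyCount {J : Type*} (B : J → J → ZMod 2) (e : Fin 4 → J) : ℕ :=
  Fintype.card {i // faceAzygy B e i = 1}

section AddCommGroup

variable {J : Type*} [AddCommGroup J]

open scoped Classical in
/-- A description of `classIdx` treating the four members of a quadruple
`{q + B(e 0, ·), …, q + B(e 3, ·)}` on an equal footing. -/
noncomputable def tetradClass (B : J → J → ZMod 2) (e : Fin 4 → J) : ℕ :=
  if ∑ i, e i = 0 then 1 else 2 + azygyCount B e / 2

/-- The vectors translating the zeroth form of a quadruple to the other three. -/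
def edgeVectors (e : Fin 4 → J) (i : Fin 3) : J := e i.succ + e 0

theorem edgeVectors_injective {e : Fin 4 → J} (he : Function.Injective e) :
    Function.Injective (edgeVectors e) :=
  fun _ _ h => Fin.succ_injective _ (he (add_right_cancel h))

/-- The quadruple `q + B(e 0, ·), …, q + B(e 3, ·)` consists of four distinct even quadratic
refinements of `B`; distinctness is expressed through the translation vectors. -/
structure IsEvenTetrad [Finite J] (B : J → J → ZMod 2) (q : J → ZMod 2) (e : Fin 4 → J) :
    Prop where
  mem_quadSet : q ∈ QuadSet B
  injective : Function.Injective e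
  arfInv_eq_zero : ∀ i, ArfInv (quadTranslate B q (e i)) = 0

theorem IsEvenTetrad.comp_perm [Finite J] {B : J → J → ZMod 2} {q : J → ZMod 2} {e : Fin 4 → J}
    (h : IsEvenTetrad B q e) (σ : Equiv.Perm (Fin 4)) : IsEvenTetrad B q (e ∘ σ) :=
  ⟨h.mem_quadSet, h.injective.comp σ.injective, fun i => h.arfInv_eq_zero (σ i)⟩

end AddCommGroup

section Module

variable {J : Type*} [AddCommGroup J] [Module (ZMod 2) J]
  {B : J → J → ZMod 2} {q q' : J → ZMod 2}

theorem linearIndependent_fin_two_of_ne {v : Fin 2 → J} (hv₀ : ∀ i, v i ≠ 0) (hv : v 0 ≠ v 1) :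
    LinearIndependent (ZMod 2) v := by
  rw [Fintype.linearIndependent_iff]
  intro c hc
  rw [Fin.sum_univ_two] at hc
  rcases zmod_two_eq_zero_or_one (c 0) with h0 | h0 <;>
    rcases zmod_two_eq_zero_or_one (c 1) with h1 | h1
  · exact Fin.forall_fin_two.2 ⟨h0, h1⟩
  · simp [h0, h1, hv₀] at hc
  · simp [h0, h1, hv₀] at hc
  · rw [h0, h1, one_smul, one_smul, ← ZModModule.sub_eq_add, sub_eq_zero] at hc
    exact absurd hc hv

theorem linearIndependent_fin_three_of_ne {v : Fin 3 → J} (hv₀ : ∀ i, v i ≠ 0)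
    (hv : Function.Injective v) (hsum : v 2 ≠ v 0 + v 1) : LinearIndependent (ZMod 2) v := by
  rw [linearIndependent_finSucc']
  refine ⟨linearIndependent_fin_two_of_ne (fun i => hv₀ _) (hv.ne (by decide)), fun hmem => ?_⟩
  have hrange : Set.range (Fin.init v) = {v 0, v 1} := by
    ext x
    simp [Fin.init, eq_comm]
  rw [hrange, Submodule.mem_span_pair] at hmem
  obtain ⟨c, d, hcd⟩ := hmem
  change c • v 0 + d • v 1 = v 2 at hcd
  rcases zmod_two_eq_zero_or_one c with rfl | rfl <;>
    rcases zmod_two_eq_zero_or_one d with rfl | rfl <;>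
    simp only [zero_smul, one_smul, zero_add, add_zero] at hcd
  · exact hv₀ 2 hcd.symm
  · exact hv.ne (by decide) hcd
  · exact hv.ne (by decide) hcd
  · exact hsum hcd.symm

namespace IsSymplectic

theorem azygy_swap (hB : IsSymplectic B) (x y z : J) : azygy B y x z = azygy B x y z := by
  unfold azygy
  rw [hB.comm y x, hB.comm x z, hB.comm z y]
  ring

theorem azygy_self (hB : IsSymplectic B) (x y : J) : azygy B x x y = 0 := by
  unfold azygy
  rw [hB.self_eq_zero, hB.comm x y, zero_add, CharTwo.add_self_eq_zero]

theorem azygy_add_right (hB : IsSymplectic B) (x y z t : J) :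
    azygy B (x + t) (y + t) (z + t) = azygy B x y z := by
  simp only [azygy, hB.add_left, hB.add_right, hB.self_eq_zero, hB.comm t]
  grind

theorem form_add_add (hB : IsSymplectic B) (x y z : J) :
    B (x + z) (y + z) = azygy B x y z := by
  simp only [azygy, hB.add_left, hB.add_right, hB.self_eq_zero, hB.comm z]
  grind

theorem azygy_eq_faceAzygy (hB : IsSymplectic B) (e : Fin 4 → J) {i j k l : Fin 4}
    (hnodup : [i, j, k, l].Nodup) : azygy B (e j) (e k) (e l) = faceAzygy B e i := by
  have hcases : (j, k, l) ∈ [(i + 1, i + 2, i + 3), (i + 2, i + 3, i + 1), (i + 3, i + 1, i + 2),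
      (i + 2, i + 1, i + 3), (i + 1, i + 3, i + 2), (i + 3, i + 2, i + 1)] := by
    revert i j k l
    decide
  simp only [List.mem_cons, List.not_mem_nil, or_false, Prod.mk.injEq] at hcases
  unfold faceAzygy
  rcases hcases with ⟨rfl, rfl, rfl⟩ | ⟨rfl, rfl, rfl⟩ | ⟨rfl, rfl, rfl⟩ | ⟨rfl, rfl, rfl⟩ |
    ⟨rfl, rfl, rfl⟩ | ⟨rfl, rfl, rfl⟩
  · rfl
  · rw [azygy_rotate]
  · rw [azygy_rotate, azygy_rotate]
  · rw [hB.azygy_swap]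
  · rw [← azygy_rotate, hB.azygy_swap, azygy_rotate, azygy_rotate]
  · rw [hB.azygy_swap, azygy_rotate]

theorem azygy_eq_of_faceAzygy_eq (hB : IsSymplectic B) {e e' : Fin 4 → J}
    (h : faceAzygy B e = faceAzygy B e') (j k l : Fin 4) :
    azygy B (e j) (e k) (e l) = azygy B (e' j) (e' k) (e' l) := by
  by_cases hjk : j = k
  · rw [hjk, hB.azygy_self, hB.azygy_self]
  by_cases hkl : k = l
  · rw [hkl, ← azygy_rotate, hB.azygy_self, ← azygy_rotate, hB.azygy_self]
  by_cases hlj : l = j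
  · rw [hlj, azygy_rotate, hB.azygy_self, azygy_rotate, hB.azygy_self]
  obtain ⟨i, hi⟩ : ∃ i, [i, j, k, l].Nodup := by
    revert j k l
    decide
  rw [hB.azygy_eq_faceAzygy e hi, hB.azygy_eq_faceAzygy e' hi, h]

theorem faceAzygy_comp_perm (hB : IsSymplectic B) (e : Fin 4 → J) (σ : Equiv.Perm (Fin 4))
    (i : Fin 4) : faceAzygy B (e ∘ σ) i = faceAzygy B e (σ i) := by
  have hnodup : [i, i + 1, i + 2, i + 3].Nodup := by
    revert i
    decide
  exact hB.azygy_eq_faceAzygy e (hnodup.map σ.injective)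

theorem sum_faceAzygy (hB : IsSymplectic B) (e : Fin 4 → J) : ∑ i, faceAzygy B e i = 0 := by
  simp only [Fin.sum_univ_four, faceAzygy, azygy, Fin.reduceAdd, hB.comm (e 3),
    hB.comm (e 2) (e 0)]
  grind

theorem even_azygyCount (hB : IsSymplectic B) (e : Fin 4 → J) : Even (azygyCount B e) := by
  rw [← ZMod.natCast_eq_zero_iff_even, azygyCount, natCast_card_eq_one_eq_sum, hB.sum_faceAzygy]

theorem tetradClass_comp_perm (hB : IsSymplectic B) (e : Fin 4 → J) (σ : Equiv.Perm (Fin 4)) :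
    tetradClass B (e ∘ σ) = tetradClass B e := by
  have hcount : azygyCount B (e ∘ σ) = azygyCount B e :=
    Fintype.card_congr (σ.subtypeEquiv fun i => by rw [hB.faceAzygy_comp_perm])
  have hsum : ∑ i, (e ∘ σ) i = ∑ i, e i := Equiv.sum_comp σ e
  rw [tetradClass, tetradClass, hcount, hsum]

theorem tetradClass_add_const (hB : IsSymplectic B) (e : Fin 4 → J) (t : J) :
    tetradClass B (fun i => e i + t) = tetradClass B e := by
  have hface : faceAzygy B (fun i => e i + t) = faceAzygy B e :=
    funext fun i => hB.azygy_add_right ..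
  have hfour : ∑ _i : Fin 4, t = 0 := by
    rw [Fin.sum_univ_four, ZModModule.add_self, zero_add, ZModModule.add_self]
  rw [tetradClass, tetradClass, azygyCount, azygyCount, hface,
    Finset.sum_add_distrib, hfour, add_zero]

theorem faceAzygy_vec (hB : IsSymplectic B) (a b c : J) :
    faceAzygy B ![0, a, b, c] = ![B a b + B b c + B a c, B b c, B a c, B a b] := by
  funext i
  fin_cases i <;> simp [faceAzygy, azygy, hB.zero_left, hB.comm _ 0, hB.comm c a]

theorem classIdx_eq_tetradClass (hB : IsSymplectic B) (a b c : J) :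
    classIdx B a b c = tetradClass B ![0, a, b, c] := by
  have hsum : ∑ i, ![0, a, b, c] i = a + b + c := by simp [Fin.sum_univ_four]
  rw [classIdx, tetradClass, azygyCount, hB.faceAzygy_vec, hsum]
  congr 1
  generalize B a b = r, B a c = s, B b c = t
  revert r s t
  decide

end IsSymplectic

theorem tetradClass_map {M : J ≃ₗ[ZMod 2] J} (hM : ∀ x y, B (M x) (M y) = B x y)
    (e : Fin 4 → J) : tetradClass B (M ∘ e) = tetradClass B e := by
  have hface : faceAzygy B (M ∘ e) = faceAzygy B e :=
    funext fun i => by simp only [faceAzygy, azygy, Function.comp_apply, hM]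
  have hsum : ∑ i, (M ∘ e) i = 0 ↔ ∑ i, e i = 0 := by
    rw [← M.map_eq_zero_iff (x := ∑ i, e i), map_sum]
    rfl
  rw [tetradClass, tetradClass, azygyCount, azygyCount, hface]
  classical exact if_congr hsum rfl rfl

theorem add_edgeVectors (e : Fin 4 → J) (i : Fin 3) : e 0 + edgeVectors e i = e i.succ := by
  rw [edgeVectors, add_comm (e i.succ), ← add_assoc, ZModModule.add_self, zero_add]

theorem edgeVectors_two_eq_iff (e : Fin 4 → J) :
    edgeVectors e 2 = edgeVectors e 0 + edgeVectors e 1 ↔ ∑ i, e i = 0 := by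
  have hsum : edgeVectors e 2 - (edgeVectors e 0 + edgeVectors e 1) = ∑ i, e i := by
    simp only [edgeVectors, Fin.sum_univ_four, ZModModule.sub_eq_add]
    change e 3 + e 0 + (e 1 + e 0 + (e 2 + e 0)) = _
    rw [show e 3 + e 0 + (e 1 + e 0 + (e 2 + e 0)) = e 0 + e 0 + (e 0 + e 1 + e 2 + e 3) by abel,
      ZModModule.add_self, zero_add]
  rw [← hsum, sub_eq_zero]

theorem edgeVectors_ne_zero {e : Fin 4 → J} (he : Function.Injective e) (i : Fin 3) :
    edgeVectors e i ≠ 0 := by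
  rw [edgeVectors, ← ZModModule.sub_eq_add, sub_ne_zero]
  exact he.ne (Fin.succ_ne_zero i)

theorem quadTranslate_comp_symm {M : J ≃ₗ[ZMod 2] J}
    (hM : ∀ x y, B (M x) (M y) = B x y) (q : J → ZMod 2) (a : J) :
    quadTranslate B q a ∘ M.symm = quadTranslate B (q ∘ M.symm) (M a) := by
  funext x
  simp only [Function.comp_apply, quadTranslate, ← hM a, M.apply_symm_apply]

theorem IsSymplectic.tetradClass_eq_of_range_eq (hB : IsSymplectic B) {e e' : Fin 4 → J}
    (he : Function.Injective e) (he' : Function.Injective e')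
    (h : Set.range (fun i => quadTranslate B q (e i)) =
      Set.range fun i => quadTranslate B q' (e' i)) :
    tetradClass B e = tetradClass B e' := by
  obtain ⟨σ, hσ⟩ := exists_perm_comp_eq_of_range_eq
    ((hB.quadTranslate_injective q).comp he) ((hB.quadTranslate_injective q').comp he') h
  have hσ (i : Fin 4) : quadTranslate B q (e (σ i)) = quadTranslate B q' (e' i) := congrFun hσ i
  have hq' : q' = quadTranslate B q (e (σ 0) + e' 0) := by
    rw [← hB.quadTranslate_quadTranslate, hσ, hB.quadTranslate_quadTranslate, ZModModule.add_self,
      hB.quadTranslate_zero]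
  have heσ : e ∘ σ = fun i => e' i + (e (σ 0) + e' 0) := funext fun i => by
    refine hB.quadTranslate_injective q ((hσ i).trans ?_)
    rw [hq', hB.quadTranslate_quadTranslate, add_comm (e' i)]
  rw [← hB.tetradClass_comp_perm e σ, heσ, hB.tetradClass_add_const]

variable [Finite J]

namespace QuadSet

theorem exists_isometry_fin_three (hB : IsSymplectic B) (hq : q ∈ QuadSet B)
    (hq' : q' ∈ QuadSet B) {v w : Fin 3 → J} (hv : Function.Injective v)
    (hw : Function.Injective w) (hv₀ : ∀ i, v i ≠ 0) (hw₀ : ∀ i, w i ≠ 0)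
    (hsum : v 2 = v 0 + v 1 ↔ w 2 = w 0 + w 1)
    (hqq' : ∃ M : J ≃ₗ[ZMod 2] J, ∀ x, q' (M x) = q x) (hqv : ∀ i, q (v i) = q' (w i))
    (hgram : ∀ i j, B (v i) (v j) = B (w i) (w j)) :
    ∃ M : J ≃ₗ[ZMod 2] J, (∀ x, q' (M x) = q x) ∧ ∀ i, M (v i) = w i := by
  by_cases hdep : v 2 = v 0 + v 1
  · obtain ⟨M, hM, hMv⟩ := exists_isometry_of_linearIndependent hB hq hq'
      (linearIndependent_fin_two_of_ne (v := Fin.init v) (fun i => hv₀ _) (hv.ne (by decide)))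
      (linearIndependent_fin_two_of_ne (v := Fin.init w) (fun i => hw₀ _) (hw.ne (by decide)))
      hqq' (fun i => hqv _) (fun i j => hgram _ _)
    have h0 : M (v 0) = w 0 := hMv 0
    have h1 : M (v 1) = w 1 := hMv 1
    have h2 : M (v 2) = w 2 := by rw [hdep, map_add, h0, h1, hsum.1 hdep]
    exact ⟨M, hM, by simp [Fin.forall_fin_succ, h0, h1, h2]⟩
  · exact exists_isometry_of_linearIndependent hB hq hq'
      (linearIndependent_fin_three_of_ne hv₀ hv hdep)
      (linearIndependent_fin_three_of_ne hw₀ hw (mt hsum.2 hdep)) hqq' hqv hgram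

theorem azygy_eq_zero_of_arfInv_eq_zero (hB : IsSymplectic B) (hq : q ∈ QuadSet B) {x y z : J}
    (hx : ArfInv (quadTranslate B q x) = 0) (hy : ArfInv (quadTranslate B q y) = 0)
    (hz : ArfInv (quadTranslate B q z) = 0) (hxyz : ArfInv (quadTranslate B q (x + y + z)) = 0) :
    azygy B x y z = 0 := by
  have hqz := quadTranslate_mem hB hq z
  have hzero {u : J} (hu : ArfInv (quadTranslate B q (z + u)) = 0) : quadTranslate B q z u = 0 :=
    apply_eq_zero_of_arfInv_eq_zero hqz hz (by rwa [hB.quadTranslate_quadTranslate])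
  have hcancel (u : J) : z + (u + z) = u := by
    rw [add_comm u, ← add_assoc, ZModModule.add_self, zero_add]
  have hxz := hzero (u := x + z) (by rwa [hcancel])
  have hyz := hzero (u := y + z) (by rwa [hcancel])
  have hxyz := hzero (u := x + z + (y + z)) (by rwa [← add_assoc, hcancel, ← add_assoc])
  rw [apply_add hqz, hxz, hyz, hB.form_add_add, zero_add, zero_add] at hxyz
  exact hxyz

end QuadSet

namespace IsEvenTetrad

variable {e e' : Fin 4 → J}

theorem apply_edgeVectors (hB : IsSymplectic B) (h : IsEvenTetrad B q e) (i : Fin 3) :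
    quadTranslate B q (e 0) (edgeVectors e i) = 0 := by
  refine QuadSet.apply_eq_zero_of_arfInv_eq_zero (QuadSet.quadTranslate_mem hB h.mem_quadSet _)
    (h.arfInv_eq_zero 0) ?_
  rw [hB.quadTranslate_quadTranslate, add_edgeVectors]
  exact h.arfInv_eq_zero i.succ

theorem azygyCount_eq_zero (hB : IsSymplectic B) (h : IsEvenTetrad B q e)
    (hsum : ∑ i, e i = 0) : azygyCount B e = 0 := by
  rw [azygyCount, Fintype.card_eq_zero_iff, isEmpty_subtype]
  intro i
  have hi : e (i + 1) + e (i + 2) + e (i + 3) = e i := by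
    have hshift : ∑ j, e (i + j) = 0 := (Equiv.sum_comp (Equiv.addLeft i) e).trans hsum
    rw [Fin.sum_univ_four, add_zero, add_assoc, add_assoc, ← ZModModule.sub_eq_add,
      sub_eq_zero, ← add_assoc] at hshift
    exact hshift.symm
  have hzero : faceAzygy B e i = 0 :=
    QuadSet.azygy_eq_zero_of_arfInv_eq_zero hB h.mem_quadSet (h.arfInv_eq_zero _)
      (h.arfInv_eq_zero _) (h.arfInv_eq_zero _) (by rw [hi]; exact h.arfInv_eq_zero i)
  simp [hzero]

theorem sum_eq_zero_iff_and_azygyCount_eq (hB : IsSymplectic B) (h : IsEvenTetrad B q e)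
    (h' : IsEvenTetrad B q' e') (hclass : tetradClass B e = tetradClass B e') :
    (∑ i, e i = 0 ↔ ∑ i, e' i = 0) ∧ azygyCount B e = azygyCount B e' := by
  obtain ⟨m, hm⟩ := hB.even_azygyCount e
  obtain ⟨m', hm'⟩ := hB.even_azygyCount e'
  by_cases hs : ∑ i, e i = 0 <;> by_cases hs' : ∑ i, e' i = 0 <;>
    simp only [tetradClass, hs, hs', if_true, if_false] at hclass
  · exact ⟨iff_of_true hs hs',
      (h.azygyCount_eq_zero hB hs).trans (h'.azygyCount_eq_zero hB hs').symm⟩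
  · lia
  · lia
  · exact ⟨iff_of_false hs hs', by lia⟩

theorem exists_isometry_of_faceAzygy_eq (hB : IsSymplectic B) (h : IsEvenTetrad B q e)
    (h' : IsEvenTetrad B q' e') (hsum : ∑ i, e i = 0 ↔ ∑ i, e' i = 0)
    (hface : faceAzygy B e = faceAzygy B e') :
    ∃ M : J ≃ₗ[ZMod 2] J,
      ∀ i x, quadTranslate B q' (e' i) (M x) = quadTranslate B q (e i) x := by
  have hq := QuadSet.quadTranslate_mem hB h.mem_quadSet (e 0)
  have hq' := QuadSet.quadTranslate_mem hB h'.mem_quadSet (e' 0)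
  obtain ⟨M, hM, hMe⟩ := QuadSet.exists_isometry_fin_three hB hq hq'
    (edgeVectors_injective h.injective) (edgeVectors_injective h'.injective)
    (edgeVectors_ne_zero h.injective) (edgeVectors_ne_zero h'.injective)
    (by rw [edgeVectors_two_eq_iff, edgeVectors_two_eq_iff, hsum])
    (QuadSet.exists_isometry_of_arfInv_eq_zero hB hq hq' (h.arfInv_eq_zero 0)
      (h'.arfInv_eq_zero 0))
    (fun i => (h.apply_edgeVectors hB i).trans (h'.apply_edgeVectors hB i).symm)
    (fun i j => by
      simp only [edgeVectors, hB.form_add_add]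
      exact hB.azygy_eq_of_faceAzygy_eq hface _ _ _)
  refine ⟨M, Fin.cases hM fun i x => ?_⟩
  rw [← add_edgeVectors e, ← add_edgeVectors e', ← hB.quadTranslate_quadTranslate,
    ← hB.quadTranslate_quadTranslate]
  change quadTranslate B q' (e' 0) (M x) + B (edgeVectors e' i) (M x) =
    quadTranslate B q (e 0) x + B (edgeVectors e i) x
  rw [hM, ← hMe, QuadSet.form_map_eq hq hq' hM]

theorem exists_isometry_of_tetradClass_eq (hB : IsSymplectic B) (h : IsEvenTetrad B q e)
    (h' : IsEvenTetrad B q' e') (hclass : tetradClass B e = tetradClass B e') :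
    ∃ (σ : Equiv.Perm (Fin 4)) (M : J ≃ₗ[ZMod 2] J),
      ∀ i x, quadTranslate B q' (e' i) (M x) = quadTranslate B q (e (σ i)) x := by
  obtain ⟨hsum, hcount⟩ := h.sum_eq_zero_iff_and_azygyCount_eq hB h' hclass
  obtain ⟨σ, hσ⟩ := exists_perm_comp_eq_of_card_eq hcount.symm
  obtain ⟨M, hM⟩ := (h.comp_perm σ).exists_isometry_of_faceAzygy_eq hB h'
    (by rw [← hsum, ← Equiv.sum_comp σ e]; rfl)
    (by rw [← hσ]; exact funext (hB.faceAzygy_comp_perm e σ))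
  exact ⟨σ, M, hM⟩

theorem exists_symplectic_iff_tetradClass_eq (hB : IsSymplectic B) (h : IsEvenTetrad B q e)
    (h' : IsEvenTetrad B q' e') :
    (∃ M : J ≃ₗ[ZMod 2] J, (∀ x y, B (M x) (M y) = B x y) ∧
      Set.range (fun i => quadTranslate B q (e i) ∘ M.symm) =
        Set.range fun i => quadTranslate B q' (e' i)) ↔
    tetradClass B e = tetradClass B e' := by
  constructor
  · rintro ⟨M, hM, hrange⟩
    simp only [quadTranslate_comp_symm hM] at hrange
    rw [← tetradClass_map hM e]
    exact hB.tetradClass_eq_of_range_eq (M.injective.comp h.injective) h'.injective hrange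
  · intro hclass
    obtain ⟨σ, M, hM⟩ := h.exists_isometry_of_tetradClass_eq hB h' hclass
    refine ⟨M, QuadSet.form_map_eq (QuadSet.quadTranslate_mem hB h.mem_quadSet _)
      (QuadSet.quadTranslate_mem hB h'.mem_quadSet _) (hM 0), ?_⟩
    have hcomp (i : Fin 4) :
        quadTranslate B q (e (σ i)) ∘ M.symm = quadTranslate B q' (e' i) := funext fun x => by
      rw [Function.comp_apply, ← hM, M.apply_symm_apply]
    rw [← funext hcomp]
    exact (σ.surjective.range_comp fun i => quadTranslate B q (e i) ∘ M.symm).symm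

theorem of_pairwise_ne (hB : IsSymplectic B) (hq : q ∈ QuadSet B) {a b c : J}
    (hne : List.Pairwise (· ≠ ·)
      [q, quadTranslate B q a, quadTranslate B q b, quadTranslate B q c])
    (h : ArfInv q = 0) (ha : ArfInv (quadTranslate B q a) = 0)
    (hb : ArfInv (quadTranslate B q b) = 0) (hc : ArfInv (quadTranslate B q c) = 0) :
    IsEvenTetrad B q ![0, a, b, c] where
  mem_quadSet := hq
  injective := by
    have hlist : List.ofFn (quadTranslate B q ∘ ![0, a, b, c]) =
        [q, quadTranslate B q a, quadTranslate B q b, quadTranslate B q c] := by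
      simp [hB.quadTranslate_zero]
    exact (List.nodup_ofFn.1 (hlist ▸ hne)).of_comp
  arfInv_eq_zero := by
    simp [Fin.forall_fin_succ, hB.quadTranslate_zero, h, ha, hb, hc]

end IsEvenTetrad

end Module

theorem range_comp_vec_four {α β : Type*} (f : α → β) (a b c d : α) :
    Set.range (fun i => f (![a, b, c, d] i)) = {f a, f b, f c, f d} := by
  ext y
  simp [Fin.exists_fin_succ, eq_comm]

theorem stmt_13_general {J : Type*} [AddCommGroup J] [Module (ZMod 2) J] [Finite J]
    (B : J → J → ZMod 2) (hB : IsSymplectic B)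
    (q q' : J → ZMod 2) (hq : q ∈ QuadSet B) (hq' : q' ∈ QuadSet B)
    (a₁ a₂ a₃ b₁ b₂ b₃ : J)
    (hdistinct : List.Pairwise (· ≠ ·)
      [q, fun x => q x + B a₁ x, fun x => q x + B a₂ x, fun x => q x + B a₃ x])
    (hdistinct' : List.Pairwise (· ≠ ·)
      [q', fun x => q' x + B b₁ x, fun x => q' x + B b₂ x, fun x => q' x + B b₃ x])
    (hArf : ArfInv q = 0) (hArf' : ArfInv q' = 0)
    (hArf₁ : ArfInv (fun x => q x + B a₁ x) = 0)
    (hArf₂ : ArfInv (fun x => q x + B a₂ x) = 0)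
    (hArf₃ : ArfInv (fun x => q x + B a₃ x) = 0)
    (hArf₁' : ArfInv (fun x => q' x + B b₁ x) = 0)
    (hArf₂' : ArfInv (fun x => q' x + B b₂ x) = 0)
    (hArf₃' : ArfInv (fun x => q' x + B b₃ x) = 0) :
    (∃ M : J ≃ₗ[ZMod 2] J, (∀ x y, B (M x) (M y) = B x y) ∧
      ({fun x => q (M.symm x), fun x => q (M.symm x) + B a₁ (M.symm x),
        fun x => q (M.symm x) + B a₂ (M.symm x),
        fun x => q (M.symm x) + B a₃ (M.symm x)} : Set (J → ZMod 2)) =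
      ({q', fun x => q' x + B b₁ x, fun x => q' x + B b₂ x,
        fun x => q' x + B b₃ x} : Set (J → ZMod 2))) ↔
    classIdx B a₁ a₂ a₃ = classIdx B b₁ b₂ b₃ := by
  have h := IsEvenTetrad.of_pairwise_ne hB hq hdistinct hArf hArf₁ hArf₂ hArf₃
  have h' := IsEvenTetrad.of_pairwise_ne hB hq' hdistinct' hArf' hArf₁' hArf₂' hArf₃'
  rw [hB.classIdx_eq_tetradClass, hB.classIdx_eq_tetradClass,
    ← h.exists_symplectic_iff_tetradClass_eq hB h']
  have hrange (M : J ≃ₗ[ZMod 2] J) :=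
    range_comp_vec_four (fun a => quadTranslate B q a ∘ M.symm) 0 a₁ a₂ a₃
  simp only [range_comp_vec_four, hrange, hB.quadTranslate_zero]
  rfl

/-- In a 12-dimensional symplectic `𝔽₂`-space, the four classes
`A₁, A₂, A₃, A₄` are exactly the orbits of the symplectic group acting on 4-element sets of
even quadratic refinements: two such sets `{q, q+a₁, q+a₂, q+a₃}` and
`{q', q'+b₁, q'+b₂, q'+b₃}` lie in the same orbit iff they lie in the same class. -/
theorem stmt_13 {J : Type*} [AddCommGroup J] [Module (ZMod 2) J] [Finite J]
    (B : J → J → ZMod 2) (hB : IsSymplectic B)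
    (hdim : Module.finrank (ZMod 2) J = 12)
    (q q' : J → ZMod 2) (hq : q ∈ QuadSet B) (hq' : q' ∈ QuadSet B)
    (a₁ a₂ a₃ b₁ b₂ b₃ : J)
    (hdistinct : List.Pairwise (· ≠ ·)
      [q, fun x => q x + B a₁ x, fun x => q x + B a₂ x, fun x => q x + B a₃ x])
    (hdistinct' : List.Pairwise (· ≠ ·)
      [q', fun x => q' x + B b₁ x, fun x => q' x + B b₂ x, fun x => q' x + B b₃ x])
    (hArf : ArfInv q = 0) (hArf' : ArfInv q' = 0)
    (hArf₁ : ArfInv (fun x => q x + B a₁ x) = 0)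
    (hArf₂ : ArfInv (fun x => q x + B a₂ x) = 0)
    (hArf₃ : ArfInv (fun x => q x + B a₃ x) = 0)
    (hArf₁' : ArfInv (fun x => q' x + B b₁ x) = 0)
    (hArf₂' : ArfInv (fun x => q' x + B b₂ x) = 0)
    (hArf₃' : ArfInv (fun x => q' x + B b₃ x) = 0) :
    (∃ M : J ≃ₗ[ZMod 2] J, (∀ x y, B (M x) (M y) = B x y) ∧
      ({fun x => q (M.symm x), fun x => q (M.symm x) + B a₁ (M.symm x),
        fun x => q (M.symm x) + B a₂ (M.symm x),
        fun x => q (M.symm x) + B a₃ (M.symm x)} : Set (J → ZMod 2)) =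
      ({q', fun x => q' x + B b₁ x, fun x => q' x + B b₂ x,
        fun x => q' x + B b₃ x} : Set (J → ZMod 2))) ↔
    classIdx B a₁ a₂ a₃ = classIdx B b₁ b₂ b₃ :=
  stmt_13_general B hB q q' hq hq' a₁ a₂ a₃ b₁ b₂ b₃ hdistinct hdistinct' hArf hArf' hArf₁ hArf₂
    hArf₃ hArf₁' hArf₂' hArf₃'
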